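/- Fix t > 0 with t ≠ 2 and x ∈ ℝ, and let F_n(x) = Φ(g_n)^{n} − (1 − Φ(g_n))^{n} where g_n = (c_n x + d_n)^{1/t}, defined for n large enough that c_n x + d_n > 0. Then lim_{n→∞} b_n² ( F_n(x) − Λ(x) ) = Λ(x) e^{−x} ( 1 + x + ((2−t)/2) x² ). -/

import Mathlib

open Real Filter Topology

/-- The standard normal distribution function. -/
noncomputable def stdNormalCDF (x : ℝ) : ℝ :=
  ∫ u in Set.Iic x, Real.exp (-u ^ 2 / 2) / Real.sqrt (2 * Real.pi)

/-- The Gumbel distribution function `Λ(x) = exp(−e^{−x})`. -/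
noncomputable def gumbel (x : ℝ) : ℝ := Real.exp (-Real.exp (-x))

noncomputable def nphi (x : ℝ) : ℝ := Real.exp (-x ^ 2 / 2) / Real.sqrt (2 * Real.pi)

lemma nphi_pos (x : ℝ) : 0 < nphi x := by unfold nphi; positivity

lemma nphi_hasDerivAt (x : ℝ) : HasDerivAt nphi (-x * nphi x) x := by
  have h : HasDerivAt (fun x : ℝ => -x ^ 2 / 2) (-x) x := by
    have := ((hasDerivAt_pow 2 x).neg).div_const 2
    refine this.congr_deriv ?_
    push_cast; ring
  have := h.exp.div_const (Real.sqrt (2 * Real.pi))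
  unfold nphi
  refine this.congr_deriv ?_
  ring

lemma nphi_cont : Continuous nphi := by unfold nphi; fun_prop

lemma nphi_integrable : MeasureTheory.Integrable nphi := by
  have := (integrable_exp_neg_mul_sq (b := 1/2) (by norm_num)).div_const (Real.sqrt (2 * Real.pi))
  refine this.congr (Eventually.of_forall fun x => ?_)
  unfold nphi
  dsimp only
  congr 2
  ring

lemma nphi_integral : ∫ x, nphi x = 1 := by
  have h1 : ∀ x, nphi x = Real.exp (-(1/2) * x ^ 2) / Real.sqrt (2 * Real.pi) := by
    intro x; unfold nphi; congr 2; ring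
  simp_rw [h1]
  rw [MeasureTheory.integral_div, integral_gaussian]
  have : π / (1/2) = 2 * π := by ring
  rw [this]
  exact div_self (by positivity)

lemma cdf_hasDerivAt (x : ℝ) : HasDerivAt stdNormalCDF (nphi x) x := by
  have h : ∀ y, stdNormalCDF y = stdNormalCDF 0 + ∫ u in (0:ℝ)..y, nphi u := by
    intro y
    have := intervalIntegral.integral_Iic_sub_Iic (a := 0) (b := y)
      (nphi_integrable.integrableOn) (nphi_integrable.integrableOn)
    rw [← this]
    unfold stdNormalCDF nphi
    ring
  have h2 := (nphi_cont.integral_hasStrictDerivAt 0 x).hasDerivAt.const_add (stdNormalCDF 0)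
  exact h2.congr_of_eventuallyEq (Eventually.of_forall h)

lemma cdf_tendsto : Tendsto stdNormalCDF atTop (𝓝 1) := by
  have := (MeasureTheory.aecover_Iic (μ := MeasureTheory.volume) (tendsto_id (α := ℝ) (x := atTop))).integral_tendsto_of_countably_generated nphi_integrable
  rw [nphi_integral] at this
  exact this

lemma nphi_tendsto : Tendsto nphi atTop (𝓝 0) := by
  have h : Tendsto (fun x : ℝ => -x ^ 2 / 2) atTop atBot := by
    have : Tendsto (fun x : ℝ => x ^ 2 / 2) atTop atTop :=
      (tendsto_pow_atTop (by norm_num)).atTop_div_const (by norm_num)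
    exact (tendsto_neg_atTop_atBot.comp this).congr (fun x => by simp; ring)
  have := (Real.tendsto_exp_atBot.comp h).div_const (Real.sqrt (2 * Real.pi))
  rw [zero_div] at this
  exact this

lemma mills : Tendsto (fun x => (nphi x / x - (1 - stdNormalCDF x)) / (nphi x / x ^ 3))
    atTop (𝓝 1) := by
  have hinv : Tendsto (fun x : ℝ => 1 / x) atTop (𝓝 0) := by
    simpa using tendsto_inv_atTop_zero (𝕜 := ℝ)
  refine HasDerivAt.lhopital_zero_atTop_on_Ioi (a := 0)
    (f' := fun x => -nphi x / x ^ 2) (g' := fun x => -nphi x / x ^ 2 - 3 * nphi x / x ^ 4)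
    ?_ ?_ ?_ ?_ ?_ ?_
  · intro x hx
    have hx0 : x ≠ 0 := ne_of_gt hx
    have := ((nphi_hasDerivAt x).div (hasDerivAt_id x) hx0).sub ((cdf_hasDerivAt x).const_sub 1)
    refine this.congr_deriv ?_
    simp only [id]
    field_simp
    ring
  · intro x hx
    have hx0 : x ≠ 0 := ne_of_gt hx
    have := ((nphi_hasDerivAt x).div (hasDerivAt_pow 3 x) (pow_ne_zero 3 hx0))
    refine this.congr_deriv ?_
    push_cast
    field_simp
  · intro x hx
    have hx0 : 0 < x := hx
    have h1 : 0 < nphi x / x ^ 2 := div_pos (nphi_pos x) (by positivity)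
    have h2 : 0 < 3 * nphi x / x ^ 4 := div_pos (mul_pos (by norm_num) (nphi_pos x)) (by positivity)
    have : -nphi x / x ^ 2 - 3 * nphi x / x ^ 4 < 0 := by rw [neg_div]; linarith
    exact ne_of_lt this
  · have := (nphi_tendsto.mul hinv).sub (cdf_tendsto.const_sub 1)
    simp only [mul_one_div] at this
    simpa using this
  · have := (nphi_tendsto.mul (hinv.pow 3))
    simpa [div_eq_mul_inv] using this
  · have h : Tendsto (fun x : ℝ => 1 / (1 + 3 * (1 / x) ^ 2)) atTop (𝓝 (1 / (1 + 3 * 0 ^ 2))) :=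
      tendsto_const_nhds.div (((hinv.pow 2).const_mul 3).const_add 1) (by norm_num)
    norm_num only at h
    refine h.congr' ?_
    filter_upwards [eventually_gt_atTop 0] with x hx
    have := nphi_pos x
    have h3 : -nphi x / x ^ 2 - 3 * nphi x / x ^ 4 = (-nphi x / x ^ 2) * (1 + 3 * (1 / x) ^ 2) := by
      field_simp
      ring
    rw [h3]
    have h4 : -nphi x / x ^ 2 ≠ 0 := by
      rw [neg_div]; exact neg_ne_zero.mpr (by positivity)
    rw [div_mul_cancel_left₀ h4]
    simp

lemma lin_pos (k : ℝ) : ∀ᶠ e in 𝓝 (0:ℝ), 0 < 1 + k * e := by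
  have : Tendsto (fun e : ℝ => 1 + k * e) (𝓝 0) (𝓝 (1 + k * 0)) :=
    (Continuous.tendsto (by fun_prop) 0)
  rw [mul_zero, add_zero] at this
  exact this.eventually (lt_mem_nhds one_pos)

lemma lin_rpow_deriv (k p e : ℝ) (h : 0 < 1 + k * e) :
    HasDerivAt (fun e : ℝ => (1 + k * e) ^ p) (k * p * (1 + k * e) ^ (p - 1)) e := by
  have h1 : HasDerivAt (fun e : ℝ => 1 + k * e) k e := by
    simpa using ((hasDerivAt_id e).const_mul k).const_add 1
  exact h1.rpow_const (Or.inl h.ne')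

lemma expandA (t x : ℝ) (ht : 0 < t) :
    Tendsto (fun e : ℝ => ((1 + t * x * e) ^ (2 / t) - 1 - 2 * x * e) / (2 * e ^ 2)) (𝓝[>] 0)
      (𝓝 ((2 - t) / 2 * x ^ 2)) := by
  have hp := (lin_pos (t * x)).filter_mono (nhdsWithin_le_nhds (s := Set.Ioi 0))
  have hc : ∀ p : ℝ, Tendsto (fun e : ℝ => (1 + t * x * e) ^ p) (𝓝[>] 0) (𝓝 1) := by
    intro p
    have := (lin_rpow_deriv (t * x) p 0 (by simp)).continuousAt.tendsto
    simp only [mul_zero, add_zero, Real.one_rpow] at this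
    exact this.mono_left nhdsWithin_le_nhds
  have hid : Tendsto (fun e : ℝ => e) (𝓝[>] 0) (𝓝 0) := nhdsWithin_le_nhds
  refine HasDerivAt.lhopital_zero_nhdsGT
    (f' := fun e => 2 * x * ((1 + t * x * e) ^ (2 / t - 1) - 1)) (g' := fun e => 4 * e)
    ?_ ?_ ?_ ?_ ?_ ?_
  · filter_upwards [hp] with e he
    have := ((lin_rpow_deriv (t * x) (2 / t) e he).sub_const 1).sub
      ((hasDerivAt_id e).const_mul (2 * x))
    refine this.congr_deriv ?_
    field_simp
  · refine Eventually.of_forall fun e => ?_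
    have := (hasDerivAt_pow 2 e).const_mul 2
    refine this.congr_deriv ?_
    push_cast; ring
  · filter_upwards [self_mem_nhdsWithin] with e he
    have : (0:ℝ) < e := he
    positivity
  · simpa using ((hc (2 / t)).sub_const 1).sub (hid.const_mul (2 * x))
  · simpa using (hid.pow 2).const_mul 2
  · have h := (lin_rpow_deriv (t * x) (2 / t - 1) 0 (by simp))
    have h2 := (hasDerivAt_iff_tendsto_slope_zero.mp h).mono_left
      (nhdsWithin_mono (0:ℝ) (s := Set.Ioi 0) (fun y hy => ne_of_gt hy))
    have h3 := h2.const_mul (x / 2)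
    have e1 : x / 2 * (t * x * (2 / t - 1) * (1 + t * x * 0) ^ (2 / t - 1 - 1))
        = (2 - t) / 2 * x ^ 2 := by
      simp only [mul_zero, add_zero, Real.one_rpow]; field_simp
    rw [e1] at h3
    refine h3.congr' ?_
    filter_upwards [self_mem_nhdsWithin] with e he
    have : e ≠ 0 := ne_of_gt he
    simp only [zero_add, mul_zero, add_zero, Real.one_rpow, smul_eq_mul]
    field_simp
    ring

lemma expandB (t x : ℝ) (ht : 0 < t) :
    Tendsto (fun e : ℝ => Real.log (1 + t * x * e) / t / e) (𝓝[>] 0) (𝓝 x) := by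
  have h : HasDerivAt (fun e : ℝ => Real.log (1 + t * x * e) / t) x 0 := by
    have h1 : HasDerivAt (fun e : ℝ => 1 + t * x * e) (t * x) 0 := by
      simpa using ((hasDerivAt_id (0:ℝ)).const_mul (t * x)).const_add 1
    have := (h1.log (by simp)).div_const t
    refine this.congr_deriv ?_
    simp; field_simp
  have h2 := (hasDerivAt_iff_tendsto_slope_zero.mp h).mono_left
      (nhdsWithin_mono (0:ℝ) (s := Set.Ioi 0) (fun y hy => ne_of_gt hy))
  refine h2.congr fun e => ?_
  simp
  ring

lemma deltaLim (f : ℝ → ℝ) (f' u : ℝ) (hf : HasDerivAt f f' u) (s v : ℕ → ℝ) (ℓ : ℝ)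
    (hs : Tendsto s atTop atTop) (h : Tendsto (fun n => s n * (v n - u)) atTop (𝓝 ℓ)) :
    Tendsto v atTop (𝓝 u) ∧
    Tendsto (fun n => s n * (f (v n) - f u)) atTop (𝓝 (f' * ℓ)) := by
  have hd : Tendsto (fun n => v n - u) atTop (𝓝 0) := by
    have := h.mul (tendsto_inv_atTop_zero.comp hs)
    rw [mul_zero] at this
    refine this.congr' ?_
    filter_upwards [hs.eventually_gt_atTop 0] with n hn
    simp only [Function.comp]
    field_simp
  constructor
  · simpa using hd.add_const u
  · have := (hf.hasFDerivAt.hasFDerivWithinAt (s := Set.univ)).lim (c := s) hd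
      (Eventually.of_forall fun _ => Set.mem_univ _) h
    simp only [add_sub_cancel, smul_eq_mul] at this
    convert this using 2
    simp [mul_comm]

lemma b_tendsto (b : ℕ → ℝ)
    (hb : ∀ n : ℕ, 1 ≤ n → 0 < b n ∧
      2 * Real.pi * (b n) ^ 2 * Real.exp ((b n) ^ 2) = (n : ℝ) ^ 2) :
    Tendsto (fun n => (b n) ^ 2) atTop atTop := by
  have h1 : Tendsto (fun n : ℕ => (2 * Real.log n - Real.log (2 * π)) / 2) atTop atTop := by
    refine Tendsto.atTop_div_const (by norm_num) ?_
    refine tendsto_atTop_add_const_right _ _ ?_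
    exact (Real.tendsto_log_atTop.comp tendsto_natCast_atTop_atTop).const_mul_atTop (by norm_num)
  refine tendsto_atTop_mono' _ ?_ h1
  filter_upwards [eventually_ge_atTop 1] with n hn
  obtain ⟨h0, h⟩ := hb n hn
  have h2 : Real.log ((n:ℝ) ^ 2) = Real.log (2 * π) + Real.log (b n ^ 2) + b n ^ 2 := by
    rw [← h, Real.log_mul (by positivity) (by positivity), Real.log_mul (by positivity) (by positivity),
      Real.log_exp]
  have h3 := Real.log_le_sub_one_of_pos (x := b n ^ 2) (by positivity)
  rw [Real.log_pow] at h2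
  push_cast at h2
  linarith

lemma n_eq (b : ℝ) (n : ℕ) (h0 : 0 < b)
    (h : 2 * Real.pi * b ^ 2 * Real.exp (b ^ 2) = (n : ℝ) ^ 2) :
    (n : ℝ) = Real.sqrt (2 * π) * b * Real.exp (b ^ 2 / 2) := by
  have : (n:ℝ) ^ 2 = (Real.sqrt (2 * π) * b * Real.exp (b ^ 2 / 2)) ^ 2 := by
    rw [mul_pow, mul_pow, Real.sq_sqrt (by positivity), ← Real.exp_nat_mul, ← h]
    congr 2
    push_cast; ring
  exact (pow_left_inj₀ (by positivity) (by positivity) (by norm_num)).mp this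

lemma ratio_tendsto (b : ℕ → ℝ)
    (hb : ∀ n : ℕ, 1 ≤ n → 0 < b n ∧
      2 * Real.pi * (b n) ^ 2 * Real.exp ((b n) ^ 2) = (n : ℝ) ^ 2) :
    Tendsto (fun n => (b n) ^ 2 / n) atTop (𝓝 0) := by
  have hs := b_tendsto b hb
  have h1 : Tendsto (fun n => 2 / Real.sqrt (b n ^ 2)) atTop (𝓝 0) :=
    tendsto_const_nhds.div_atTop (Real.tendsto_sqrt_atTop.comp hs)
  refine squeeze_zero' (Eventually.of_forall fun n => by positivity) ?_ h1
  filter_upwards [eventually_ge_atTop 1] with n hn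
  obtain ⟨h0, h⟩ := hb n hn
  rw [Real.sqrt_sq h0.le, n_eq (b n) n h0 h, div_le_div_iff₀ (by positivity) h0]
  have h2 := Real.add_one_le_exp (b n ^ 2 / 2)
  have h3 : 1 ≤ Real.sqrt (2 * π) := by
    rw [Real.one_le_sqrt]; linarith [Real.pi_gt_three]
  have h4 : b n ^ 2 / 2 ≤ Real.sqrt (2 * π) * Real.exp (b n ^ 2 / 2) := by
    nlinarith [Real.exp_pos (b n ^ 2 / 2)]
  nlinarith [mul_le_mul_of_nonneg_left h4 h0.le]

/-- asymptotics of `n (1 - Φ(g n))` give those of `Φ(g n)^n - (1 - Φ(g n))^n`. -/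
lemma final_step (s q : ℕ → ℝ) (x κ : ℝ) (hs : Tendsto s atTop atTop)
    (hr : Tendsto (fun n => s n / n) atTop (𝓝 0))
    (hy : Tendsto (fun n => s n * (n * q n - Real.exp (-x))) atTop (𝓝 κ)) :
    Tendsto (fun n => s n * ((1 - q n) ^ n - (q n) ^ n - gumbel x)) atTop
      (𝓝 (-(gumbel x * κ))) := by
  have hyl : Tendsto (fun n => n * q n) atTop (𝓝 (Real.exp (-x))) :=
    (deltaLim id 1 _ (hasDerivAt_id _) s (fun n => n * q n) κ hs hy).1
  have hinv : Tendsto (fun n : ℕ => 1 / (n:ℝ)) atTop (𝓝 0) := tendsto_one_div_atTop_nhds_zero_nat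
  have hq : Tendsto q atTop (𝓝 0) := by
    have := hyl.mul hinv
    rw [mul_zero] at this
    refine this.congr' ?_
    filter_upwards [eventually_ge_atTop 1] with n hn
    have : (n:ℝ) ≠ 0 := by positivity
    field_simp
  have hsq : Tendsto (fun n => s n * q n) atTop (𝓝 0) := by
    have := hyl.mul hr
    rw [mul_zero] at this
    refine this.congr' ?_
    filter_upwards [eventually_ge_atTop 1] with n hn
    have : (n:ℝ) ≠ 0 := by positivity
    field_simp
  have hqs : ∀ᶠ n in atTop, |q n| ≤ 1 / 2 := by
    have := hq.abs
    rw [abs_zero] at this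
    exact (this.eventually (gt_mem_nhds (by norm_num : (0:ℝ) < 1/2))).mono fun n hn => hn.le
  -- tail term
  have hT : Tendsto (fun n => s n * (q n) ^ n) atTop (𝓝 0) := by
    refine squeeze_zero_norm' ?_ (by simpa using hsq.abs)
    filter_upwards [hqs, eventually_ge_atTop 1] with n h1 h2
    rw [Real.norm_eq_abs, abs_mul, abs_pow]
    refine mul_le_mul_of_nonneg_left ?_ (abs_nonneg _)
    exact pow_le_of_le_one (abs_nonneg _) (by linarith) (by omega)
  -- log correction
  have hL : Tendsto (fun n => s n * (n * (Real.log (1 - q n) + q n))) atTop (𝓝 0) := by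
    have hB : Tendsto (fun n => 2 * |(s n * q n) * (n * q n)|) atTop (𝓝 0) := by
      simpa using ((hsq.mul hyl).abs).const_mul 2
    refine squeeze_zero_norm' ?_ hB
    filter_upwards [hqs] with n h1
    have h2 := abs_le.mp h1
    have hpos : 0 < 1 - q n := by linarith
    have u1 := Real.log_le_sub_one_of_pos hpos
    have u2 := Real.one_sub_inv_le_log_of_pos hpos
    have u3 : -(2 * q n ^ 2) - q n ≤ 1 - (1 - q n)⁻¹ := by
      have : (1 - q n)⁻¹ ≤ 1 + q n + 2 * q n ^ 2 := by
        rw [inv_le_iff_one_le_mul₀ hpos]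
        nlinarith [sq_nonneg (q n), mul_nonneg (sq_nonneg (q n)) (by linarith : 0 ≤ 1 - 2 * q n)]
      linarith
    have u4 : |Real.log (1 - q n) + q n| ≤ 2 * q n ^ 2 := by
      rw [abs_le]; constructor
      · linarith
      · nlinarith [sq_nonneg (q n)]
    rw [Real.norm_eq_abs, abs_mul, abs_mul]
    calc |s n| * (|(n:ℝ)| * |Real.log (1 - q n) + q n|)
        ≤ |s n| * (|(n:ℝ)| * (2 * q n ^ 2)) := by gcongr
      _ = 2 * |(s n * q n) * (n * q n)| := by
        rw [abs_mul, abs_mul, abs_mul, ← sq_abs (q n)]; ring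
  have hv : Tendsto (fun n => s n * (n * Real.log (1 - q n) - (-Real.exp (-x)))) atTop (𝓝 (-κ)) := by
    have := hL.sub hy
    rw [zero_sub] at this
    refine this.congr fun n => ?_
    ring
  have hE := (deltaLim Real.exp _ _ (Real.hasDerivAt_exp _) s _ _ hs hv).2
  have := hE.sub hT
  rw [sub_zero] at this
  have e1 : Real.exp (-Real.exp (-x)) * -κ = -(gumbel x * κ) := by unfold gumbel; ring
  rw [e1] at this
  refine this.congr' ?_
  filter_upwards [hqs] with n h1
  have h2 := abs_le.mp h1
  have hpos : 0 < 1 - q n := by linarith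
  rw [Real.exp_nat_mul, Real.exp_log hpos]
  unfold gumbel
  ring

/-- Hall's first-order result, `t ≠ 2`: With `b_n` the unique positive
solution of `2π b_n² exp(b_n²) = n²`, `c_n = t b_n^{t−2}`, `d_n = b_n^t`
(for `t > 0`, `t ≠ 2`), `g_n = (c_n x + d_n)^{1/t}` and
`F_n(x) = Φ(g_n)^n − (1 − Φ(g_n))^n`:
`lim_{n→∞} b_n² (F_n(x) − Λ(x)) = Λ(x) e^{−x} (1 + x + ((2−t)/2)x²)`. -/
theorem powered_extremes_first_order_limit_t_ne_two
    (b : ℕ → ℝ)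
    (hb : ∀ n : ℕ, 1 ≤ n → 0 < b n ∧
      2 * Real.pi * (b n) ^ 2 * Real.exp ((b n) ^ 2) = (n : ℝ) ^ 2)
    (t : ℝ) (ht : 0 < t) (ht2 : t ≠ 2) (x : ℝ)
    (c d g F : ℕ → ℝ)
    (hc : ∀ n : ℕ, c n = t * b n ^ (t - 2))
    (hd : ∀ n : ℕ, d n = b n ^ t)
    (hg : ∀ n : ℕ, g n = (c n * x + d n) ^ (1 / t))
    (hF : ∀ n : ℕ, F n = stdNormalCDF (g n) ^ n - (1 - stdNormalCDF (g n)) ^ n) :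
    Tendsto (fun n : ℕ => (b n) ^ 2 * (F n - gumbel x)) atTop
      (𝓝 (gumbel x * Real.exp (-x) * (1 + x + (2 - t) / 2 * x ^ 2))) := by
  have hs := b_tendsto b hb
  have hr := ratio_tendsto b hb
  have he0 : Tendsto (fun n => (b n ^ 2)⁻¹) atTop (𝓝[>] 0) := tendsto_inv_atTop_nhdsGT_zero.comp hs
  have heN : Tendsto (fun n => (b n ^ 2)⁻¹) atTop (𝓝 0) := he0.mono_right nhdsWithin_le_nhds
  have hA := (expandA t x ht).comp he0
  have hB := (expandB t x ht).comp he0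
  have hw := heN.eventually (lin_pos (t * x))
  set w : ℕ → ℝ := fun n => 1 + t * x * (b n ^ 2)⁻¹ with hwdef
  replace hw : ∀ᶠ n in atTop, 0 < w n := hw
  have hw1 : ∀ p : ℝ, Tendsto (fun n => w n ^ p) atTop (𝓝 1) := by
    intro p
    have := (lin_rpow_deriv (t * x) p 0 (by simp)).continuousAt.tendsto
    simp only [mul_zero, add_zero, Real.one_rpow] at this
    exact this.comp heN
  have hbpos : ∀ᶠ n in atTop, 0 < b n := by
    filter_upwards [eventually_ge_atTop 1] with n hn using (hb n hn).1
  have hbt : Tendsto b atTop atTop := by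
    refine (Real.tendsto_sqrt_atTop.comp hs).congr' ?_
    filter_upwards [hbpos] with n hn
    exact Real.sqrt_sq hn.le
  have hgw : ∀ᶠ n in atTop, g n = b n * w n ^ (1 / t) := by
    filter_upwards [hbpos, hw] with n hn hwn
    have h1 : c n * x + d n = b n ^ t * w n := by
      rw [hc, hd, hwdef, Real.rpow_sub hn, Real.rpow_two]
      field_simp
      ring
    rw [hg, h1, Real.mul_rpow (by positivity) hwn.le, ← Real.rpow_mul hn.le,
      mul_one_div_cancel ht.ne', Real.rpow_one]
  have hgt : Tendsto g atTop atTop := by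
    have := hbt.atTop_mul_pos one_pos (hw1 (1 / t))
    refine this.congr' ?_
    filter_upwards [hgw] with n hn
    exact hn.symm
  have hM := mills.comp hgt
  -- exponent
  set A : ℕ → ℝ := fun n => Real.log (w n) / t + b n ^ 2 / 2 * (w n ^ (2 / t) - 1) - x with hAdef
  have hAl : Tendsto (fun n => b n ^ 2 * ((-x - A n) - (-x))) atTop
      (𝓝 (-(x + (2 - t) / 2 * x ^ 2))) := by
    refine (hB.add hA).neg.congr' ?_
    filter_upwards [hbpos] with n hn
    simp only [Function.comp, hAdef, hwdef]
    field_simp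
    ring
  obtain ⟨hA1, hA2⟩ := deltaLim Real.exp _ _ (Real.hasDerivAt_exp _) _ _ _ hs hAl
  have hA3 := (Real.continuous_exp.tendsto _).comp hA1
  have hy : Tendsto (fun n => b n ^ 2 * (n * (1 - stdNormalCDF (g n)) - Real.exp (-x))) atTop
      (𝓝 (-(Real.exp (-x) * (1 + x + (2 - t) / 2 * x ^ 2)))) := by
    have h1 := hA2.sub ((hA3.mul hM).mul (hw1 (-(2 / t))))
    have e1 : Real.exp (-x) * -(x + (2 - t) / 2 * x ^ 2) - Real.exp (-x) * 1 * 1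
      = -(Real.exp (-x) * (1 + x + (2 - t) / 2 * x ^ 2)) := by ring
    rw [e1] at h1
    refine h1.congr' ?_
    filter_upwards [hbpos, hw, hgw, eventually_ge_atTop 1] with n hn hwn hgn hn1
    have hgpos : 0 < g n := by rw [hgn]; exact mul_pos hn (Real.rpow_pos_of_pos hwn _)
    have hg2 : g n ^ 2 = b n ^ 2 * w n ^ (2 / t) := by
      rw [hgn, mul_pow, ← Real.rpow_two (w n ^ (1 / t)), ← Real.rpow_mul hwn.le]
      congr 2
      ring
    have hw2 : b n ^ 2 / g n ^ 2 = w n ^ (-(2 / t)) := by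
      rw [hg2, Real.rpow_neg hwn.le]
      have := Real.rpow_pos_of_pos hwn (2 / t)
      field_simp
    have hE : (n : ℝ) * (nphi (g n) / g n) = Real.exp (-x - A n) := by
      have q1 : Real.exp (-x - A n) =
          Real.exp (b n ^ 2 / 2) * Real.exp (-g n ^ 2 / 2) * (w n ^ (1 / t))⁻¹ := by
        rw [← Real.rpow_neg hwn.le, Real.rpow_def_of_pos hwn, ← Real.exp_add, ← Real.exp_add]
        congr 1
        simp only [hAdef]
        rw [hg2]
        ring
      rw [q1, n_eq (b n) n hn (hb n hn1).2]
      have := Real.rpow_pos_of_pos hwn (1 / t)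
      have h2 : 0 < Real.sqrt (2 * π) := by positivity
      unfold nphi
      generalize Real.exp (-g n ^ 2 / 2) = E
      rw [hgn]
      field_simp
    simp only [Function.comp]
    rw [← hw2, ← hE]
    have := nphi_pos (g n)
    field_simp
    ring
  have hfin := final_step _ _ x _ hs hr hy
  have e2 : -(gumbel x * -(Real.exp (-x) * (1 + x + (2 - t) / 2 * x ^ 2))) =
    gumbel x * Real.exp (-x) * (1 + x + (2 - t) / 2 * x ^ 2) := by ring
  rw [e2] at hfin
  refine hfin.congr fun n => ?_
  rw [hF, sub_sub_cancel]
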